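/- arXiv:2401.15812 — 2 statements merged into one kernel-verified Lean document; each statement's English description precedes it below -/
import Mathlib

section
/- With high probability, for every vertex v with 1 ≤ deg_{B_{⌊Cn⌋}}(v) ≤ k−1, at least k−1 of the edges e_{⌊Cn⌋+1}, …, e_{τ_k} are incident to v. -/
open Finset Filter

namespace RGP

/-- Number of edges of the complete graph on `n` vertices. -/
def numEdges (n : ℕ) : ℕ := n * (n - 1) / 2

/-- An edge of the complete graph on `Fin n` (an unordered pair of distinct vertices). -/
abbrev EdgeType (n : ℕ) := {e : Sym2 (Fin n) // ¬ e.IsDiag}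

/-- A uniformly random permutation of the edges of `K_n` is modelled by a bijection
`σ` between positions `Fin (numEdges n)` and edges; `σ i` is the edge `e_{i+1}`. -/
abbrev Ord (n : ℕ) := Fin (numEdges n) ≃ EdgeType n

/-- Degree of a vertex `v` in a set `S` of edges. -/
def deg {n : ℕ} (S : Finset (Sym2 (Fin n))) (v : Fin n) : ℕ :=
  (S.filter (fun e => v ∈ e)).card

/-- The edge set `{e_1, …, e_m}` of `G_{n,m}` in the random graph process `σ`. -/
def procEdges {n : ℕ} (σ : Ord n) (m : ℕ) : Finset (Sym2 (Fin n)) :=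
  (Finset.univ.filter (fun i : Fin (numEdges n) => (i : ℕ) < m)).image (fun i => (σ i).1)

/-- The hitting time `τ_k` for minimum degree at least `k`. -/
noncomputable def tau {n : ℕ} (k : ℕ) (σ : Ord n) : ℕ :=
  sInf {m | ∀ v : Fin n, k ≤ deg (procEdges σ m) v}

open scoped Classical in
/-- The probability of an event under the uniformly random edge ordering. -/
noncomputable def Pr {n : ℕ} (p : Ord n → Prop) : ℝ :=
  ((Finset.univ : Finset (Ord n)).filter p).card / (Fintype.card (Ord n) : ℝ)

/-- A deterministic online strategy: given the sequence of edges revealed so far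
(the last entry being the edge just revealed), decide whether to purchase it. -/
abbrev Strategy (n : ℕ) := List (Sym2 (Fin n)) → Bool

/-- The list of the first `i` revealed edges `e_1, …, e_i`. -/
def prefixList {n : ℕ} (σ : Ord n) (i : ℕ) : List (Sym2 (Fin n)) :=
  (List.range i).filterMap (fun j => if h : j < numEdges n then some (σ ⟨j, h⟩).1 else none)

/-- `buy st σ i` is the edge set of Builder's graph `B_i`: the edges purchased by the
strategy `st` among `e_1, …, e_i`. -/
def buy {n : ℕ} (st : Strategy n) (σ : Ord n) : ℕ → Finset (Sym2 (Fin n))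
  | 0 => ∅
  | i + 1 =>
    if h : i < numEdges n then
      if st (prefixList σ (i + 1)) then insert (σ ⟨i, h⟩).1 (buy st σ i)
      else buy st σ i
    else buy st σ i

end RGP

namespace RGP

open scoped Classical in
/-- Builder's graph from the first loop of Algorithm 1: `e_i` is purchased if and only if
both of its endpoints have degree less than `k` in `B_{i−1}`, or at least one endpoint
has degree `0` in `G_{n,i−1}`. -/
noncomputable def algB {n : ℕ} (k : ℕ) (σ : Ord n) : ℕ → Finset (Sym2 (Fin n))
  | 0 => ∅
  | i + 1 =>
    if h : i < numEdges n then
      if (∀ v ∈ ((σ ⟨i, h⟩ : EdgeType n) : Sym2 (Fin n)), deg (algB k σ i) v < k) ∨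
          (∃ v ∈ ((σ ⟨i, h⟩ : EdgeType n) : Sym2 (Fin n)), deg (procEdges σ i) v = 0) then
        insert ((σ ⟨i, h⟩ : EdgeType n) : Sym2 (Fin n)) (algB k σ i)
      else algB k σ i
    else algB k σ i

end RGP

namespace RGP

/-!
In a random graph with average degree `a`, the expected number of vertices of degree `j` has order
`n * a ^ j * exp (-a)`. For `a = log n + c * log (log n)` this is of order `(log n) ^ (j - c)`, so
if `k - 2 < c < k - 1` it tends to infinity for `j = k - 1` and to zero for `j ≤ k - 2`. By the
second moment method some vertex then still has degree `k - 1`, so the corresponding time precedes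
`τ_k`. Ignoring the first `O(n)` edges changes `a` only by `O(1)`, which leaves the order unchanged;
by the first moment method, every vertex is therefore incident to at least `k - 1` of the remaining
edges.
-/

section SecondMoment
open MeasureTheory ProbabilityTheory
variable {Ω ι : Type*} [MeasurableSpace Ω] {μ : Measure Ω} [IsProbabilityMeasure μ]

theorem measureReal_biInter_compl_mul_sq_le (I : Finset ι) {A : ι → Set Ω}
    (hA : ∀ i, MeasurableSet (A i)) :
    μ.real (⋂ i ∈ I, (A i)ᶜ) * (∑ i ∈ I, μ.real (A i)) ^ 2 ≤
      ∑ i ∈ I, ∑ j ∈ I, μ.real (A i ∩ A j) - (∑ i ∈ I, μ.real (A i)) ^ 2 := by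
  set X : Ω → ℝ := fun ω => ∑ i ∈ I, (A i).indicator 1 ω with hX
  have hX_mem : MemLp X 2 μ := memLp_finsetSum I fun i _ =>
    memLp_indicator_const 2 (hA i) 1 (.inr (measure_ne_top μ _))
  have integral_X : μ[X] = ∑ i ∈ I, μ.real (A i) := by
    rw [integral_finsetSum I fun i _ => (integrable_const 1).indicator (hA i)]
    simp only [integral_indicator_one (hA _)]
  have integral_X_sq : μ[X ^ 2] = ∑ i ∈ I, ∑ j ∈ I, μ.real (A i ∩ A j) := by
    have : X ^ 2 = fun ω => ∑ i ∈ I, ∑ j ∈ I, (A i ∩ A j).indicator (1 : Ω → ℝ) ω := by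
      ext ω
      simp only [hX, Pi.pow_apply, sq, sum_mul_sum, Set.inter_indicator_one, Pi.mul_apply]
    have hint : ∀ i j, Integrable ((A i ∩ A j).indicator (1 : Ω → ℝ)) μ := fun i j =>
      (integrable_const 1).indicator ((hA i).inter (hA j))
    rw [this, integral_finsetSum I fun i _ => integrable_finsetSum I fun j _ => hint i j]
    refine sum_congr rfl fun i _ => ?_
    rw [integral_finsetSum I fun j _ => hint i j]
    simp only [integral_indicator_one ((hA i).inter (hA _))]
  rcases (sum_nonneg fun i _ => measureReal_nonneg : 0 ≤ ∑ i ∈ I, μ.real (A i)).eq_or_lt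
    with h0 | hpos
  · rw [← h0]
    simpa using sum_nonneg fun i _ => sum_nonneg fun j _ => measureReal_nonneg
  have hsub : (⋂ i ∈ I, (A i)ᶜ) ⊆ {ω | ∑ i ∈ I, μ.real (A i) ≤ |X ω - μ[X]|} := by
    intro ω hω
    have : X ω = 0 := sum_eq_zero fun i hi => Set.indicator_of_notMem (Set.mem_iInter₂.1 hω i hi) _
    simp only [Set.mem_ofPred_eq, this, integral_X, zero_sub, abs_neg, le_abs_self]
  have chebyshev : μ.real (⋂ i ∈ I, (A i)ᶜ) ≤ Var[X; μ] / (∑ i ∈ I, μ.real (A i)) ^ 2 :=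
    ENNReal.toReal_le_of_le_ofReal (div_nonneg (variance_nonneg _ _) (sq_nonneg _))
      ((measure_mono hsub).trans (meas_ge_le_variance_div_sq hX_mem hpos))
  rwa [variance_eq_sub hX_mem, integral_X, integral_X_sq, le_div_iff₀ (by positivity)]
    at chebyshev

theorem measureReal_biInter_compl_le {I : Finset ι} (hI : I.Nonempty) {A : ι → Set Ω}
    (hA : ∀ i, MeasurableSet (A i)) {p r : ℝ} (hp : 0 < p) (hr : 0 ≤ r)
    (hone : ∀ i ∈ I, μ.real (A i) = p)
    (hpair : ∀ i ∈ I, ∀ j ∈ I, i ≠ j → μ.real (A i ∩ A j) ≤ r) :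
    μ.real (⋂ i ∈ I, (A i)ᶜ) ≤ (#I * p)⁻¹ + (r / p ^ 2 - 1) := by
  classical
  have : (0 : ℝ) < #I := by exact_mod_cast hI.card_pos
  have sum_one : ∑ i ∈ I, μ.real (A i) = #I * p := by
    rw [sum_congr rfl hone, sum_const, nsmul_eq_mul]
  have sum_pair : ∑ i ∈ I, ∑ j ∈ I, μ.real (A i ∩ A j) ≤ #I * p + #I ^ 2 * r :=
    calc ∑ i ∈ I, ∑ j ∈ I, μ.real (A i ∩ A j)
        ≤ ∑ i ∈ I, ∑ j ∈ I, ((if i = j then p else 0) + r) := by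
          gcongr with i hi j hj
          by_cases hij : i = j
          · subst hij
            simp [hone i hi, hr]
          · simpa [hij] using hpair i hi j hj hij
      _ = #I * p + #I ^ 2 * r := by
          simp only [sum_add_distrib, sum_ite_eq, sum_ite_mem, inter_self, sum_const, nsmul_eq_mul]
          ring
  have second_moment := measureReal_biInter_compl_mul_sq_le (μ := μ) I hA
  rw [sum_one] at second_moment
  calc μ.real (⋂ i ∈ I, (A i)ᶜ)
      ≤ (#I * p + #I ^ 2 * r - (#I * p) ^ 2) / (#I * p) ^ 2 := by
        rw [le_div_iff₀ (by positivity)]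
        linarith
    _ = (#I * p)⁻¹ + (r / p ^ 2 - 1) := by
        field_simp
        ring

end SecondMoment

section UniformSubset
variable {α β : Type*}

theorem exists_perm_map_eq [Finite β] {s t : Finset β} (h : #s = #t) :
    ∃ π : Equiv.Perm β, s.map π.toEmbedding = t := by
  classical
  have := Fintype.ofFinite β
  refine ⟨(Finset.equivOfCardEq h).extendSubtype, eq_of_subset_of_card_le ?_ (by simp [h])⟩
  intro x hx
  obtain ⟨y, hy, rfl⟩ := mem_map.1 hx
  exact (Finset.equivOfCardEq h).extendSubtype_mem y hy

variable [Fintype α] [Fintype β] [DecidableEq α] [DecidableEq β]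

theorem card_filter_map_eq_of_card_eq (P : Finset α) {s t : Finset β} (h : #s = #t) :
    #{σ : α ≃ β | P.map σ.toEmbedding = s} = #{σ : α ≃ β | P.map σ.toEmbedding = t} := by
  obtain ⟨π, rfl⟩ := exists_perm_map_eq h
  refine card_equiv (Equiv.equivCongr (Equiv.refl α) π) fun σ => ?_
  have : (Equiv.equivCongr (Equiv.refl α) π σ).toEmbedding = σ.toEmbedding.trans π.toEmbedding := by
    ext; simp
  simp only [mem_filter, mem_univ, true_and, this, ← Finset.map_map, Finset.map_inj]

theorem card_filter_map_mul_choose (P : Finset α) (F : Finset β → Prop) [DecidablePred F] :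
    #{σ : α ≃ β | F (P.map σ.toEmbedding)} * (Fintype.card β).choose #P =
      #{Q ∈ powersetCard #P univ | F Q} * Fintype.card (α ≃ β) := by
  obtain ⟨c, hc⟩ : ∃ c, ∀ Q ∈ powersetCard #P (univ : Finset β),
      #{σ : α ≃ β | P.map σ.toEmbedding = Q} = c := by
    rcases (powersetCard #P (univ : Finset β)).eq_empty_or_nonempty with h | ⟨Q₀, hQ₀⟩
    · simp [h]
    · exact ⟨_, fun Q hQ => card_filter_map_eq_of_card_eq P
        ((mem_powersetCard.1 hQ).2.trans (mem_powersetCard.1 hQ₀).2.symm)⟩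
  have card_fibers : ∀ (G : Finset β → Prop) [DecidablePred G],
      #{σ : α ≃ β | G (P.map σ.toEmbedding)} = #{Q ∈ powersetCard #P univ | G Q} * c := by
    intro G _
    rw [card_eq_sum_card_fiberwise (f := fun σ : α ≃ β => P.map σ.toEmbedding)
      (t := {Q ∈ powersetCard #P univ | G Q}) (by intro σ; simp), ← smul_eq_mul, ← sum_const]
    refine sum_congr rfl fun Q hQ => ?_
    rw [← hc Q (mem_of_mem_filter Q hQ), filter_filter]
    congr 1
    ext σ
    simp only [mem_filter, mem_univ, true_and, and_iff_right_iff_imp]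
    rintro rfl
    exact (mem_filter.1 hQ).2
  have card_all := card_fibers fun _ => True
  simp only [filter_true, card_univ, card_powersetCard] at card_all
  rw [card_fibers F, card_all]
  ring

theorem card_filter_inter_eq {D S : Finset β} (hSD : S ⊆ D) {m : ℕ} (hm : #S ≤ m) :
    #{Q ∈ powersetCard m univ | Q ∩ D = S} = (Fintype.card β - #D).choose (m - #S) := by
  rw [← card_compl, ← card_powersetCard]
  have disjoint_of_mem {R : Finset β} (hR : R ∈ powersetCard (m - #S) Dᶜ) : Disjoint R D :=
    disjoint_compl_left.mono_left (mem_powersetCard.1 hR).1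
  refine card_nbij' (· \ D) (· ∪ S) (fun Q hQ => by grind [mem_compl]) (fun R hR => ?_)
    (fun Q hQ => ?_) fun R hR => ?_
  · have inter_eq : (R ∪ S) ∩ D = S := by
      rw [union_inter_distrib_right, disjoint_iff_inter_eq_empty.1 (disjoint_of_mem hR),
        empty_union, inter_eq_left.2 hSD]
    have card_eq : #(R ∪ S) = m := by
      rw [card_union_of_disjoint ((disjoint_of_mem hR).mono_right hSD),
        (mem_powersetCard.1 hR).2, Nat.sub_add_cancel hm]
    simp [inter_eq, card_eq]
  · obtain ⟨-, rfl⟩ := mem_filter.1 (mem_coe.1 hQ)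
    exact sdiff_union_inter Q D
  · simp only [union_sdiff_distrib, sdiff_eq_empty_iff_subset.2 hSD, union_empty]
    exact sdiff_eq_self_of_disjoint (disjoint_of_mem hR)

end UniformSubset

section Hypergeometric
open Real Asymptotics Topology

/-- The probability that a uniform `m`-subset of an `N`-set meets a fixed `d`-subset in a prescribed
`s`-subset of it. The value is meaningful only for `s ≤ m`, because of the truncated `m - s`. -/
noncomputable def hypergeom (N m d s : ℕ) : ℝ := (N - d).choose (m - s) / N.choose m

theorem hypergeom_nonneg (N m d s : ℕ) : 0 ≤ hypergeom N m d s := by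
  unfold hypergeom; positivity

theorem hypergeom_zero_zero {N m : ℕ} (h : m ≤ N) : hypergeom N m 0 0 = 1 :=
  div_self (Nat.cast_ne_zero.2 (Nat.choose_pos h).ne')

theorem hypergeom_succ_zero {N m d : ℕ} (h : m + d < N) :
    hypergeom N m (d + 1) 0 = hypergeom N m d 0 * (1 - m / (N - d)) := by
  obtain ⟨c, rfl⟩ : ∃ c, N = c + 1 + d := ⟨N - d - 1, by omega⟩
  have hchoose := congrArg (Nat.cast (R := ℝ)) (Nat.choose_mul_succ_eq c m)
  push_cast [Nat.cast_sub (show m ≤ c + 1 by omega)] at hchoose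
  have : (c + 1 + d - (d + 1)) = c := by omega
  simp only [hypergeom, Nat.sub_zero, Nat.add_sub_cancel, this]
  have : (c : ℝ) + 1 ≠ 0 := by positivity
  push_cast
  rw [add_sub_cancel_right, one_sub_div this, div_mul_div_comm, ← hchoose,
    mul_div_mul_right _ _ this]

theorem hypergeom_succ {N m d s : ℕ} (h : m + d ≤ N) (hs : s < m) :
    hypergeom N m d (s + 1) = hypergeom N m d s * ((m - s) / (N - (m + d) + (s + 1))) := by
  obtain ⟨t, rfl⟩ : ∃ t, m = s + 1 + t := ⟨m - s - 1, by omega⟩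
  obtain ⟨c, rfl⟩ : ∃ c, N = s + 1 + t + d + c := ⟨N - (s + 1 + t + d), by omega⟩
  have hchoose := congrArg (Nat.cast (R := ℝ)) (Nat.choose_succ_right_eq (s + 1 + t + c) t)
  rw [show s + 1 + t + c - t = s + 1 + c by omega] at hchoose
  have hd : s + 1 + t + d + c - d = s + 1 + t + c := by omega
  have hs : s + 1 + t - s = t + 1 := by omega
  simp only [hypergeom, hd, hs, Nat.add_sub_cancel_left]
  push_cast at hchoose ⊢
  have hN : ((s + 1 + t + d + c).choose (s + 1 + t) : ℝ) ≠ 0 :=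
    Nat.cast_ne_zero.2 (Nat.choose_pos (by omega)).ne'
  rw [div_mul_div_comm, div_eq_div_iff hN (mul_ne_zero hN (by ring_nf; positivity))]
  linear_combination -((s + 1 + t + d + c).choose (s + 1 + t) : ℝ) * hchoose

theorem hypergeom_zero_le_exp {N m d : ℕ} (h : m + d ≤ N) :
    hypergeom N m d 0 ≤ exp (-(m * d / N)) := by
  induction d with
  | zero => exact (hypergeom_zero_zero h).trans_le (by simp)
  | succ d ih =>
    have hd : (0 : ℝ) < N - d := sub_pos.2 (by exact_mod_cast (by omega : d < N))
    calc hypergeom N m (d + 1) 0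
        = hypergeom N m d 0 * (1 - m / (N - d)) := hypergeom_succ_zero (by omega)
      _ ≤ hypergeom N m d 0 * exp (-(m / N)) := by
          gcongr
          · exact hypergeom_nonneg N m d 0
          · refine le_trans ?_ (one_sub_le_exp_neg _)
            gcongr
            simp
      _ ≤ exp (-(m * d / N)) * exp (-(m / N)) := by
          gcongr
          exact ih (by omega)
      _ = exp (-(m * (d + 1 : ℕ) / N)) := by
          rw [← exp_add]
          push_cast
          ring_nf

theorem exp_neg_div_one_sub_le {x : ℝ} (hx : x < 1) : exp (-(x / (1 - x))) ≤ 1 - x := by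
  have hpos : 0 < 1 - x := sub_pos.2 hx
  rw [← le_log_iff_exp_le hpos]
  refine le_trans (le_of_eq ?_) (one_sub_inv_le_log_of_pos hpos)
  field_simp
  ring

theorem exp_le_hypergeom_zero {N m d : ℕ} (h : m + d < N) :
    exp (-(m * d / (N - (m + d)))) ≤ hypergeom N m d 0 := by
  induction d with
  | zero => exact le_of_le_of_eq (by simp) (hypergeom_zero_zero (by omega)).symm
  | succ d ih =>
    have hN : (m + (d + 1) : ℝ) < N := by exact_mod_cast h
    have : (0 : ℝ) ≤ m := m.cast_nonneg
    have hd : (0 : ℝ) < N - d := by linarith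
    have factor : exp (-(m / (N - (m + d)))) ≤ 1 - m / (N - d) := by
      convert exp_neg_div_one_sub_le (x := m / (N - d)) (by rw [div_lt_one hd]; linarith) using 3
      rw [one_sub_div hd.ne', div_div_div_cancel_right₀ hd.ne', sub_sub, add_comm (d : ℝ)]
    calc exp (-(m * (d + 1 : ℕ) / (N - (m + (d + 1 : ℕ)))))
        ≤ exp (-(m * (d + 1) / (N - (m + d)))) := by
          push_cast
          gcongr
          linarith
      _ = exp (-(m * d / (N - (m + d)))) * exp (-(m / (N - (m + d)))) := by
          rw [← exp_add]
          ring_nf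
      _ ≤ hypergeom N m d 0 * (1 - m / (N - d)) := by
          gcongr
          · exact hypergeom_nonneg N m d 0
          · exact ih (by omega)
      _ = hypergeom N m (d + 1) 0 := (hypergeom_succ_zero (by omega)).symm

variable {ι : Type*} {l : Filter ι} {N m d : ι → ℕ}

theorem isEquivalent_hypergeom_zero
    (hmd : (fun i => (m i + d i : ℝ)) =o[l] fun i => (N i : ℝ))
    (hprod : (fun i => (m i * d i * (m i + d i) : ℝ)) =o[l] fun i => (N i : ℝ) ^ 2)
    (hN : Tendsto (fun i => (N i : ℝ)) l atTop) :
    (fun i => hypergeom (N i) (m i) (d i) 0) ~[l] fun i => exp (-(m i * d i / N i)) := by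
  have hN_pos : ∀ᶠ i in l, (0 : ℝ) < N i := hN.eventually_gt_atTop 0
  have h_half : ∀ᶠ i in l, (m i + d i : ℝ) ≤ 1 / 2 * N i := by
    filter_upwards [hmd.bound (by norm_num : (0 : ℝ) < 1 / 2)] with i hi
    rwa [norm_of_nonneg (by positivity), norm_of_nonneg (by positivity)] at hi
  have h_err : Tendsto (fun i => exp (-(2 * (m i * d i * (m i + d i) / N i ^ 2) : ℝ))) l (𝓝 1) := by
    simpa only [mul_zero, neg_zero, exp_zero] using
      (hprod.tendsto_div_nhds_zero.const_mul 2).neg.rexp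
  refine (isEquivalent_iff_tendsto_one (.of_forall fun i => (exp_pos _).ne')).2
    (tendsto_of_tendsto_of_tendsto_of_le_of_le' h_err tendsto_const_nhds ?_ ?_)
  · filter_upwards [hN_pos, h_half] with i hpos hhalf
    have hlt : (m i + d i : ℝ) < N i := by linarith
    have hsub : (0 : ℝ) < N i - (m i + d i) := sub_pos.2 hlt
    have exponent_le : (m i * d i / (N i - (m i + d i)) : ℝ) ≤
        m i * d i / N i + 2 * (m i * d i * (m i + d i) / N i ^ 2) := by
      calc (m i * d i / (N i - (m i + d i)) : ℝ)
          = m i * d i / N i + m i * d i * (m i + d i) / (N i * (N i - (m i + d i))) := by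
            field_simp
            ring
        _ ≤ m i * d i / N i + m i * d i * (m i + d i) / (N i * (1 / 2 * N i)) := by
            gcongr
            linarith
        _ = m i * d i / N i + 2 * (m i * d i * (m i + d i) / N i ^ 2) := by
            field_simp
    rw [Pi.div_apply, le_div_iff₀ (exp_pos _), ← exp_add]
    refine le_trans (exp_le_exp.2 ?_) (exp_le_hypergeom_zero (by exact_mod_cast hlt))
    linarith
  · filter_upwards [hN_pos, h_half] with i hpos hhalf
    rw [Pi.div_apply, div_le_one (exp_pos _)]
    exact hypergeom_zero_le_exp (by exact_mod_cast (by linarith : (m i + d i : ℝ) ≤ N i))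

theorem isEquivalent_hypergeom (hm : Tendsto m l atTop)
    (hmd : (fun i => (m i + d i : ℝ)) =o[l] fun i => (N i : ℝ))
    (hprod : (fun i => (m i * d i * (m i + d i) : ℝ)) =o[l] fun i => (N i : ℝ) ^ 2) (s : ℕ) :
    (fun i => hypergeom (N i) (m i) (d i) s) ~[l]
      fun i => (m i / N i : ℝ) ^ s * exp (-(m i * d i / N i)) := by
  have hm_le : ∀ i, ‖(m i : ℝ)‖ ≤ ‖(m i + d i : ℝ)‖ := fun i => by
    rw [norm_of_nonneg (by positivity), norm_of_nonneg (by positivity)]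
    simp
  have hmN : (fun i => (m i : ℝ)) =o[l] fun i => (N i : ℝ) :=
    (IsBigO.of_bound' (.of_forall hm_le)).trans_isLittleO hmd
  have h_le : ∀ᶠ i in l, m i + d i ≤ N i := by
    filter_upwards [hmd.bound one_pos] with i hi
    rw [one_mul, norm_of_nonneg (by positivity), norm_of_nonneg (by positivity)] at hi
    exact_mod_cast hi
  have hm_atTop : Tendsto (fun i => (m i : ℝ)) l atTop := tendsto_natCast_atTop_iff.2 hm
  have hN_atTop : Tendsto (fun i => (N i : ℝ)) l atTop :=
    tendsto_natCast_atTop_iff.2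
      (tendsto_atTop_mono' l (h_le.mono fun i hi => le_of_add_le_left hi) hm)
  have const_isLittleO (c : ℝ) : (fun _ => c) =o[l] fun i => (m i : ℝ) :=
    (isLittleO_const_id_atTop c).comp_tendsto hm_atTop
  induction s with
  | zero => simpa using isEquivalent_hypergeom_zero hmd hprod hN_atTop
  | succ s ih =>
    have ratio : (fun i => (m i - s : ℝ) / (N i - (m i + d i) + (s + 1))) ~[l]
        fun i => (m i / N i : ℝ) :=
      (IsEquivalent.refl.sub_isLittleO (const_isLittleO s)).div
        ((IsEquivalent.refl.sub_isLittleO hmd).add_isLittleO ((const_isLittleO _).trans hmN))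
    refine ((ih.mul ratio).congr_left ?_).congr_right ?_
    · filter_upwards [hm.eventually_gt_atTop s, h_le] with i hs hi
      exact (hypergeom_succ hi hs).symm
    · refine .of_forall fun i => ?_
      simp only [Pi.mul_apply]
      ring

end Hypergeometric

section AverageDegree
open Real Asymptotics Topology

theorem isEquivalent_exp_of_tendsto_sub {ι : Type*} {l : Filter ι} {f g : ι → ℝ}
    (h : Tendsto (fun i => f i - g i) l (𝓝 0)) :
    (fun i => exp (f i)) ~[l] fun i => exp (g i) := by
  refine (isEquivalent_iff_tendsto_one (.of_forall fun i => (exp_pos _).ne')).2 ?_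
  have := h.rexp
  simp only [exp_sub, exp_zero] at this
  exact this

theorem isEquivalent_numEdges :
    (fun n => (numEdges n : ℝ)) ~[atTop] fun n => (n : ℝ) ^ 2 / 2 := by
  simpa only [numEdges, Nat.choose_two_right, Nat.factorial_two, Nat.cast_ofNat] using
    isEquivalent_choose 2

/-- The average degree of a graph with `n` vertices and `m` edges. -/
noncomputable def avgDegree (n m : ℕ) : ℝ := 2 * m / n

theorem avgDegree_nonneg (n m : ℕ) : 0 ≤ avgDegree n m := by
  unfold avgDegree; positivity

theorem cast_eq_avgDegree_mul {n : ℕ} (hn : n ≠ 0) (m : ℕ) : (m : ℝ) = avgDegree n m * n / 2 := by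
  rw [avgDegree, div_mul_cancel₀ _ (Nat.cast_ne_zero.2 hn), mul_div_cancel_left₀ _ two_ne_zero]

variable {m : ℕ → ℕ}

theorem eventuallyEq_avgDegree_mul (m : ℕ → ℕ) :
    (fun n => (m n : ℝ)) =ᶠ[atTop] fun n => avgDegree n (m n) * n / 2 :=
  (eventually_ne_atTop 0).mono fun _ hn => cast_eq_avgDegree_mul hn _

theorem tendsto_atTop_of_avgDegree (ha : Tendsto (fun n => avgDegree n (m n)) atTop atTop) :
    Tendsto m atTop atTop :=
  tendsto_natCast_atTop_iff.1 <| ((ha.atTop_mul_atTop₀ tendsto_natCast_atTop_atTop)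
    |>.atTop_div_const two_pos).congr' (eventuallyEq_avgDegree_mul m).symm

theorem isEquivalent_div_numEdges (m : ℕ → ℕ) :
    (fun n => (m n / numEdges n : ℝ)) ~[atTop] fun n => avgDegree n (m n) / n := by
  refine ((eventuallyEq_avgDegree_mul m).isEquivalent.div isEquivalent_numEdges).congr_right ?_
  filter_upwards [eventually_ne_atTop 0] with n hn
  have : (n : ℝ) ≠ 0 := Nat.cast_ne_zero.2 hn
  simp only [Pi.div_apply]
  field_simp

variable {d : ℕ → ℕ} {c : ℝ}

theorem tendsto_mul_div_numEdges_sub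
    (ha : (fun n => avgDegree n (m n)) =o[atTop] fun n => (n : ℝ))
    (hd : (fun n => (d n - c * n : ℝ)) =O[atTop] fun _ => (1 : ℝ)) :
    Tendsto (fun n => (m n * d n / numEdges n - c * avgDegree n (m n) : ℝ)) atTop (𝓝 0) := by
  have isEquivalent_pred : (fun n : ℕ => (n - 1 : ℝ)) ~[atTop] fun n => (n : ℝ) :=
    IsEquivalent.refl.sub_isLittleO
      ((isLittleO_const_id_atTop (1 : ℝ)).comp_tendsto tendsto_natCast_atTop_atTop)
  have numerator : (fun n => avgDegree n (m n) * (d n - c * n + c)) =o[atTop]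
      fun n : ℕ => (n - 1 : ℝ) := by
    refine IsLittleO.trans_isEquivalent ?_ isEquivalent_pred.symm
    simpa only [mul_one] using ha.mul_isBigO (hd.add (isBigO_const_const c one_ne_zero _))
  refine numerator.tendsto_div_nhds_zero.congr' ?_
  filter_upwards [eventually_gt_atTop 1] with n hn
  have hn₀ : (n : ℝ) ≠ 0 := by positivity
  have hn₁ : (n - 1 : ℝ) ≠ 0 := sub_ne_zero.2 (by exact_mod_cast hn.ne')
  rw [numEdges, ← Nat.choose_two_right, Nat.cast_choose_two,
    cast_eq_avgDegree_mul (n := n) (by omega) (m n)]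
  field_simp
  ring

theorem isEquivalent_hypergeom_numEdges
    (ha : Tendsto (fun n => avgDegree n (m n)) atTop atTop)
    (ha_sq : (fun n => avgDegree n (m n) ^ 2) =o[atTop] fun n => (n : ℝ))
    (hd : (fun n => (d n - c * n : ℝ)) =O[atTop] fun _ => (1 : ℝ)) (s : ℕ) :
    (fun n => hypergeom (numEdges n) (m n) (d n) s) ~[atTop]
      fun n => (avgDegree n (m n) / n) ^ s * exp (-(c * avgDegree n (m n))) := by
  have one_isBigO : (fun _ => (1 : ℝ)) =O[atTop] fun n => avgDegree n (m n) :=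
    ((isLittleO_const_id_atTop (1 : ℝ)).comp_tendsto ha).isBigO
  have a_isLittleO : (fun n => avgDegree n (m n)) =o[atTop] fun n => (n : ℝ) := by
    refine IsBigO.trans_isLittleO ?_ ha_sq
    simpa only [mul_one, sq] using (isBigO_refl (fun n => avgDegree n (m n)) atTop).mul one_isBigO
  have d_isBigO : (fun n => (d n : ℝ)) =O[atTop] fun n => (n : ℝ) := by
    have one_isLittleO := (isLittleO_const_id_atTop (1 : ℝ)).comp_tendsto
      (tendsto_natCast_atTop_atTop (R := ℝ))
    simpa using (hd.trans one_isLittleO.isBigO).add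
      (isBigO_const_mul_self c (fun n : ℕ => (n : ℝ)) atTop)
  have m_isBigO : (fun n => (m n : ℝ)) =O[atTop] fun n => avgDegree n (m n) * n :=
    (eventuallyEq_avgDegree_mul m).trans_isBigO (by
      simpa only [div_eq_inv_mul] using isBigO_const_mul_self (2⁻¹ : ℝ) _ atTop)
  have sum_isBigO : (fun n => (m n + d n : ℝ)) =O[atTop] fun n => avgDegree n (m n) * n :=
    m_isBigO.add (by simpa only [one_mul] using one_isBigO.mul d_isBigO)
  have sq_isBigO : (fun n : ℕ => (n : ℝ) ^ 2) =O[atTop] fun n => (numEdges n : ℝ) := by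
    simpa only [numEdges, Nat.choose_two_right] using (isTheta_choose 2).isBigO_symm
  refine (isEquivalent_hypergeom (tendsto_atTop_of_avgDegree ha) ?_ ?_ s).trans <|
    ((isEquivalent_div_numEdges m).pow s).mul <|
    isEquivalent_exp_of_tendsto_sub ?_
  · refine sum_isBigO.trans_isLittleO (.trans_isBigO ?_ sq_isBigO)
    simpa only [sq] using a_isLittleO.mul_isBigO (isBigO_refl (fun n : ℕ => (n : ℝ)) atTop)
  · refine ((m_isBigO.mul d_isBigO).mul sum_isBigO).trans_isLittleO
      (.trans_isBigO ?_ (sq_isBigO.pow 2))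
    refine (ha_sq.mul_isBigO (isBigO_refl (fun n : ℕ => (n : ℝ) ^ 3) atTop)).congr
      (fun n => ?_) fun n => ?_ <;> ring
  · simpa only [neg_sub_neg, neg_zero, neg_sub] using
      (tendsto_mul_div_numEdges_sub a_isLittleO hd).neg

end AverageDegree

section WithHighProbability
open MeasureTheory ProbabilityTheory Topology
variable {n : ℕ}

theorem card_edgeType (n : ℕ) : Fintype.card (EdgeType n) = numEdges n := by
  rw [Sym2.card_subtype_not_diag, Fintype.card_fin, numEdges, Nat.choose_two_right]

instance : Nonempty (Ord n) :=
  ⟨(Fintype.equivFinOfCardEq (card_edgeType n)).symm⟩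

instance : MeasurableSpace (Ord n) := ⊤

instance : DiscreteMeasurableSpace (Ord n) := ⟨fun _ => trivial⟩

/-- The uniform distribution on edge orderings, so that `Pr p` is the measure of `{σ | p σ}` and
Mathlib's measure theory applies to it. -/
noncomputable abbrev ordMeasure (n : ℕ) : Measure (Ord n) := uniformOn Set.univ

theorem Pr_eq_measureReal (p : Ord n → Prop) : Pr p = (ordMeasure n).real {σ | p σ} := by
  classical
  rw [Pr, measureReal_def, uniformOn_univ, ← coe_filter_univ, Measure.count_apply_finset]
  simp

/-- The property `p n` of the random graph process on `n` vertices holds with high probability. -/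
def WHP (p : ∀ n, Ord n → Prop) : Prop := Tendsto (fun n => Pr (p n)) atTop (𝓝 1)

theorem Pr_not (p : Ord n → Prop) : Pr (fun σ => ¬ p σ) = 1 - Pr p := by
  simp only [Pr_eq_measureReal, ← probReal_compl_eq_one_sub (MeasurableSet.of_discrete)]
  rfl

theorem Pr_nonneg (p : Ord n → Prop) : 0 ≤ Pr p := by
  unfold Pr; positivity

theorem Pr_le_one (p : Ord n → Prop) : Pr p ≤ 1 := by
  rw [Pr_eq_measureReal]; exact measureReal_le_one

theorem Pr_eq_zero {p : Ord n → Prop} (h : ∀ σ, ¬ p σ) : Pr p = 0 := by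
  simp [Pr_eq_measureReal, h]

theorem Pr_mono {p q : Ord n → Prop} (h : ∀ σ, p σ → q σ) : Pr p ≤ Pr q := by
  simp only [Pr_eq_measureReal]
  exact measureReal_mono h

theorem Pr_exists_le {ι : Type*} (I : Finset ι) (p : ι → Ord n → Prop) :
    Pr (fun σ => ∃ i ∈ I, p i σ) ≤ ∑ i ∈ I, Pr (p i) := by
  simp only [Pr_eq_measureReal]
  refine le_of_eq_of_le ?_ (measureReal_biUnion_finset_le I fun i => {σ | p i σ})
  congr 1
  ext σ
  simp

theorem Pr_add_Pr_le (p q : Ord n → Prop) : Pr p + Pr q ≤ 1 + Pr (fun σ => p σ ∧ q σ) := by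
  simp only [Pr_eq_measureReal]
  rw [← measureReal_union_add_inter MeasurableSet.of_discrete, Set.ofPred_and]
  gcongr
  exact measureReal_le_one

variable {p q : ∀ n, Ord n → Prop}

theorem WHP.mono (hp : WHP p) (h : ∀ᶠ n in atTop, ∀ σ, p n σ → q n σ) : WHP q :=
  tendsto_of_tendsto_of_tendsto_of_le_of_le' hp tendsto_const_nhds (h.mono fun _ hn => Pr_mono hn)
    (.of_forall fun _ => Pr_le_one _)

theorem WHP.and (hp : WHP p) (hq : WHP q) : WHP fun n σ => p n σ ∧ q n σ := by
  refine tendsto_of_tendsto_of_tendsto_of_le_of_le (g := fun n => Pr (p n) + Pr (q n) - 1) ?_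
    tendsto_const_nhds (fun n => ?_) fun n => Pr_le_one _
  · simpa using (hp.add hq).sub_const 1
  · linarith [Pr_add_Pr_le (p n) (q n)]

theorem whp_iff_tendsto_Pr_not :
    WHP p ↔ Tendsto (fun n => Pr fun σ => ¬ p n σ) atTop (𝓝 0) := by
  simp only [Pr_not, WHP]
  constructor <;> intro h
  · simpa using h.const_sub 1
  · simpa using h.const_sub 1

end WithHighProbability

section Stars
variable {n : ℕ} {u v : Fin n} {W : Finset (Fin n)}

/-- The edges of `K_n` incident to `v`. -/
def incidentEdges (v : Fin n) : Finset (EdgeType n) := {e | v ∈ e.1}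

/-- The edges of `K_n` joining `v` to the elements of `W \ {v}`. -/
def edgesTo (v : Fin n) (W : Finset (Fin n)) : Finset (EdgeType n) := {e | ∃ w ∈ W, s(v, w) = e.1}

theorem mem_incidentEdges {e : EdgeType n} : e ∈ incidentEdges v ↔ v ∈ e.1 := by
  simp [incidentEdges]

theorem mem_edgesTo {e : EdgeType n} : e ∈ edgesTo v W ↔ ∃ w ∈ W, s(v, w) = e.1 := by
  simp [edgesTo]

theorem mk_mem_edgesTo {w : Fin n} (h : ¬ s(v, w).IsDiag) :
    ⟨s(v, w), h⟩ ∈ edgesTo v W ↔ w ∈ W := by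
  simp only [mem_edgesTo, Sym2.congr_right, exists_eq_right]

theorem not_isDiag_of_mem (hv : v ∉ W) {w : Fin n} (hw : w ∈ W) : ¬ s(v, w).IsDiag :=
  fun h => hv (Sym2.mk_isDiag_iff.1 h ▸ hw)

theorem card_edgesTo (hv : v ∉ W) : #(edgesTo v W) = #W := by
  refine (card_bij (fun w hw => ⟨s(v, w), not_isDiag_of_mem hv hw⟩)
    (fun w hw => (mk_mem_edgesTo _).2 hw)
    (fun w₁ _ w₂ _ h => Sym2.congr_right.1 (congrArg Subtype.val h)) fun e he => ?_).symm
  obtain ⟨w, hw, hwe⟩ := mem_edgesTo.1 he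
  exact ⟨w, hw, Subtype.ext hwe⟩

theorem edgesTo_subset_incidentEdges : edgesTo v W ⊆ incidentEdges v := by
  intro e he
  obtain ⟨w, -, hw⟩ := mem_edgesTo.1 he
  exact mem_incidentEdges.2 (hw ▸ Sym2.mem_mk_left v w)

theorem edgesTo_compl_singleton (v : Fin n) : edgesTo v {v}ᶜ = incidentEdges v := by
  refine edgesTo_subset_incidentEdges.antisymm fun e he => ?_
  obtain ⟨w, hw⟩ := Sym2.mem_iff_exists.1 (mem_incidentEdges.1 he)
  refine mem_edgesTo.2 ⟨w, ?_, hw.symm⟩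
  have := e.2
  rw [hw, Sym2.mk_isDiag_iff] at this
  simpa [eq_comm] using this

theorem card_incidentEdges (v : Fin n) : #(incidentEdges v) = n - 1 := by
  rw [← edgesTo_compl_singleton, card_edgesTo (by simp), card_compl, Fintype.card_fin,
    card_singleton]

theorem incidentEdges_inter (huv : u ≠ v) : incidentEdges u ∩ incidentEdges v = edgesTo u {v} := by
  ext e
  simp [mem_incidentEdges, mem_edgesTo, Sym2.mem_and_mem_iff huv, eq_comm]

theorem card_incidentEdges_union (huv : u ≠ v) :
    #(incidentEdges u ∪ incidentEdges v) = 2 * (n - 1) - 1 := by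
  rw [card_union, card_incidentEdges, card_incidentEdges, incidentEdges_inter huv,
    card_edgesTo (by simpa using huv), card_singleton, two_mul]

theorem edgesTo_injOn (v : Fin n) : Set.InjOn (edgesTo v) {W | v ∉ W} := by
  have subset_of_eq {W W' : Finset (Fin n)} (hW : v ∉ W) (h : edgesTo v W = edgesTo v W') :
      W ⊆ W' := fun w hw => by
    have hdiag := not_isDiag_of_mem hW hw
    rwa [← mk_mem_edgesTo hdiag, ← h, mk_mem_edgesTo hdiag]
  exact fun W hW W' hW' h => (subset_of_eq hW h).antisymm (subset_of_eq hW' h.symm)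

theorem disjoint_edgesTo_incidentEdges (huv : u ≠ v) (hu : u ∉ W) :
    Disjoint (edgesTo v W) (incidentEdges u) := by
  rw [Finset.disjoint_left]
  intro e he
  obtain ⟨w, hw, hwe⟩ := mem_edgesTo.1 he
  rw [mem_incidentEdges, ← hwe, Sym2.mem_iff, not_or]
  exact ⟨huv, fun h => hu (h ▸ hw)⟩

end Stars

section Windows
variable {n : ℕ}

/-- The set of edges that the ordering `σ` reveals at the times in `P`. -/
def edgesAt (σ : Ord n) (P : Finset (Fin (numEdges n))) : Finset (EdgeType n) :=
  P.map σ.toEmbedding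

/-- The number of edges incident to `v` that the ordering `σ` reveals at the times in `P`. -/
def degAt (σ : Ord n) (P : Finset (Fin (numEdges n))) (v : Fin n) : ℕ :=
  #(edgesAt σ P ∩ incidentEdges v)

/-- The times `i` with `M ≤ i < m`. Times start at `0`: the edge `e_i` of the paper is revealed at
time `i - 1`. -/
def window (n M m : ℕ) : Finset (Fin (numEdges n)) := {i | M ≤ i ∧ i < m}

theorem card_window {n M m : ℕ} (h : m ≤ numEdges n) : #(window n M m) = m - M := by
  have : (window n M m).map Fin.valEmbedding = Finset.Ico M m := by
    ext i
    simp only [window, Finset.mem_map, mem_filter_univ, Fin.valEmbedding_apply, Finset.mem_Ico]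
    exact ⟨fun ⟨_, hj, hji⟩ => hji ▸ hj, fun hi => ⟨⟨i, hi.2.trans_le h⟩, hi, rfl⟩⟩
  rw [← Nat.card_Ico, ← this, card_map]

theorem degAt_eq_card (σ : Ord n) (P : Finset (Fin (numEdges n))) (v : Fin n) :
    degAt σ P v = #{i ∈ P | v ∈ (σ i).1} := by
  rw [degAt, edgesAt, ← filter_mem_eq_inter, filter_map, card_map]
  simp only [mem_incidentEdges, Function.comp_def, Equiv.coe_toEmbedding]

theorem degAt_mono (σ : Ord n) (v : Fin n) : Monotone (degAt σ · v) := fun P Q h => by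
  simp only [degAt, edgesAt]
  gcongr

theorem degAt_univ (σ : Ord n) (v : Fin n) : degAt σ univ v = n - 1 := by
  rw [degAt, edgesAt, map_univ_equiv, univ_inter, card_incidentEdges]

theorem deg_procEdges (σ : Ord n) (m : ℕ) (v : Fin n) :
    deg (procEdges σ m) v = degAt σ (window n 0 m) v := by
  have hinj : Function.Injective fun i => (σ i).1 := Subtype.val_injective.comp σ.injective
  rw [degAt_eq_card, deg, procEdges, filter_image, card_image_of_injective _ hinj]
  simp only [window, Nat.zero_le, true_and]

theorem lt_tau {σ : Ord n} {k m : ℕ} {v : Fin n} (hk : k ≤ n - 1)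
    (h : degAt σ (window n 0 m) v < k) : m < tau k σ := by
  have tau_mem : ∀ u, k ≤ deg (procEdges σ (tau k σ)) u := by
    refine Nat.sInf_mem (s := {m | ∀ u, k ≤ deg (procEdges σ m) u}) ⟨numEdges n, fun u => ?_⟩
    have : window n 0 (numEdges n) = univ := by simp [window]
    rwa [deg_procEdges, this, degAt_univ]
  by_contra! hle
  refine h.not_ge ((tau_mem v).trans ((deg_procEdges σ _ v).trans_le (degAt_mono σ v ?_)))
  exact monotone_filter_right _ fun i _ => And.imp_right (·.trans_le hle)

end Windows

section DegreeMoments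
variable {n : ℕ}

theorem Pr_edgesAt_inter_eq {P : Finset (Fin (numEdges n))} {D S : Finset (EdgeType n)}
    (hSD : S ⊆ D) (hSP : #S ≤ #P) :
    Pr (fun σ => edgesAt σ P ∩ D = S) = hypergeom (numEdges n) #P #D #S := by
  have choose_ne_zero : ((numEdges n).choose #P : ℝ) ≠ 0 :=
    Nat.cast_ne_zero.2 (Nat.choose_pos (P.card_le_univ.trans_eq (Fintype.card_fin _))).ne'
  have card_mul := card_filter_map_mul_choose (β := EdgeType n) P (· ∩ D = S)
  rw [card_filter_inter_eq hSD hSP, card_edgeType] at card_mul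
  rw [Pr, hypergeom, div_eq_div_iff (Nat.cast_ne_zero.2 Fintype.card_ne_zero) choose_ne_zero]
  rw [← Nat.cast_mul, ← Nat.cast_mul, ← card_mul]
  congr!

variable {P : Finset (Fin (numEdges n))} {k : ℕ}

theorem Pr_exists_degAt_eq_le (hk : k ≤ #P) :
    Pr (fun σ => ∃ v, degAt σ P v = k) ≤
      n * ((n - 1).choose k * hypergeom (numEdges n) #P (n - 1) k) := by
  let I : Finset (Σ _ : Fin n, Finset (EdgeType n)) :=
    univ.sigma fun v => powersetCard k (incidentEdges v)
  calc Pr (fun σ => ∃ v, degAt σ P v = k)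
      ≤ Pr (fun σ => ∃ i ∈ I, edgesAt σ P ∩ incidentEdges i.1 = i.2) :=
        Pr_mono fun σ ⟨v, hv⟩ => ⟨⟨v, edgesAt σ P ∩ incidentEdges v⟩, Finset.mem_sigma.2
          ⟨mem_univ v, mem_powersetCard.2 ⟨inter_subset_right, hv⟩⟩, rfl⟩
    _ ≤ ∑ i ∈ I, Pr (fun σ => edgesAt σ P ∩ incidentEdges i.1 = i.2) := Pr_exists_le I _
    _ = ∑ i ∈ I, hypergeom (numEdges n) #P (n - 1) k := by
        refine sum_congr rfl fun ⟨v, S⟩ hi => ?_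
        obtain ⟨hS, rfl⟩ := mem_powersetCard.1 (Finset.mem_sigma.1 hi).2
        rw [Pr_edgesAt_inter_eq hS hk, card_incidentEdges]
    _ = n * ((n - 1).choose k * hypergeom (numEdges n) #P (n - 1) k) := by
        simp only [I, sum_const, card_sigma, card_powersetCard, card_incidentEdges, card_univ,
          Fintype.card_fin, nsmul_eq_mul, smul_eq_mul, Nat.cast_mul, mul_assoc]

theorem Pr_inter_eq_edgesTo_and_le {A : Finset (Fin n)} (hk : 2 * k ≤ #P) {u v : Fin n}
    {W W' : Finset (Fin n)} (hu : u ∈ A) (hv : v ∈ A) (hW : W ∈ powersetCard k Aᶜ)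
    (hW' : W' ∈ powersetCard k Aᶜ) (hne : (u, W) ≠ (v, W')) :
    Pr (fun σ => edgesAt σ P ∩ incidentEdges u = edgesTo u W ∧
        edgesAt σ P ∩ incidentEdges v = edgesTo v W') ≤
      hypergeom (numEdges n) #P (2 * (n - 1) - 1) (2 * k) := by
  rw [mem_powersetCard] at hW hW'
  have notMem {x : Fin n} (hx : x ∈ A) {U : Finset (Fin n)} (hU : U ⊆ Aᶜ) : x ∉ U :=
    fun h => mem_compl.1 (hU h) hx
  rcases eq_or_ne u v with rfl | huv
  · have edgesTo_ne : edgesTo u W ≠ edgesTo u W' := fun h =>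
      hne (congrArg _ (edgesTo_injOn u (notMem hu hW.1) (notMem hu hW'.1) h))
    refine (Pr_eq_zero fun σ hσ => edgesTo_ne (hσ.1.symm.trans hσ.2)).trans_le ?_
    exact hypergeom_nonneg _ _ _ _
  · have card_union : #(edgesTo u W ∪ edgesTo v W') = 2 * k := by
      rw [card_union_of_disjoint, card_edgesTo (notMem hu hW.1), card_edgesTo (notMem hv hW'.1),
        hW.2, hW'.2, two_mul]
      exact (disjoint_edgesTo_incidentEdges huv.symm (notMem hv hW.1)).mono_right
        edgesTo_subset_incidentEdges
    rw [← card_incidentEdges_union huv, ← card_union, ← Pr_edgesAt_inter_eq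
      (union_subset_union edgesTo_subset_incidentEdges edgesTo_subset_incidentEdges)
      (card_union.trans_le hk)]
    refine Pr_mono fun σ ⟨hσu, hσv⟩ => ?_
    rw [inter_union_distrib_left, hσu, hσv]

theorem Pr_forall_degAt_ne_le {A : Finset (Fin n)} (hA : A.Nonempty) (hkA : k ≤ #Aᶜ)
    (hk : 2 * k ≤ #P) (hpos : 0 < hypergeom (numEdges n) #P (n - 1) k) :
    Pr (fun σ => ∀ v, degAt σ P v ≠ k) ≤
      (#A * ((#Aᶜ).choose k * hypergeom (numEdges n) #P (n - 1) k))⁻¹ +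
        (hypergeom (numEdges n) #P (2 * (n - 1) - 1) (2 * k) /
          hypergeom (numEdges n) #P (n - 1) k ^ 2 - 1) := by
  let E (i : Fin n × Finset (Fin n)) : Set (Ord n) :=
    {σ | edgesAt σ P ∩ incidentEdges i.1 = edgesTo i.1 i.2}
  have hI : (A ×ˢ powersetCard k Aᶜ).Nonempty := hA.product (powersetCard_nonempty.2 hkA)
  have card_edgesTo_eq {i} (hi : i ∈ A ×ˢ powersetCard k Aᶜ) : #(edgesTo i.1 i.2) = k := by
    obtain ⟨hiA, hiW⟩ := Finset.mem_product.1 hi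
    obtain ⟨hsub, hcard⟩ := mem_powersetCard.1 hiW
    rw [card_edgesTo fun h => mem_compl.1 (hsub h) hiA, hcard]
  have second_moment := measureReal_biInter_compl_le (μ := ordMeasure n) hI (A := E)
    (fun _ => .of_discrete) hpos (hypergeom_nonneg (numEdges n) #P (2 * (n - 1) - 1) (2 * k))
    (fun i hi => ?_) fun i hi j hj hne => ?_
  · rw [card_product, card_powersetCard, Nat.cast_mul, mul_assoc] at second_moment
    refine le_trans ?_ second_moment
    rw [Pr_eq_measureReal]
    refine MeasureTheory.measureReal_mono fun σ hσ => Set.mem_iInter₂.2 fun i hi hE => hσ i.1 ?_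
    rw [degAt, hE, card_edgesTo_eq hi]
  · rw [← Pr_eq_measureReal, Pr_edgesAt_inter_eq edgesTo_subset_incidentEdges,
      card_edgesTo_eq hi, card_incidentEdges]
    rw [card_edgesTo_eq hi]
    omega
  · rw [← Set.ofPred_and, ← Pr_eq_measureReal]
    rw [Finset.mem_product] at hi hj
    exact Pr_inter_eq_edgesTo_and_le hk hi.1 hj.1 hi.2 hj.2 hne

end DegreeMoments

section DegreeLimits
open Real Asymptotics Topology

theorem tendsto_atTop_of_isTheta {ι : Type*} {l : Filter ι} {f g : ι → ℝ} (hfg : f =Θ[l] g)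
    (hf : ∀ i, 0 ≤ f i) (hg : Tendsto g l atTop) : Tendsto f l atTop :=
  (hfg.tendsto_norm_atTop_iff.2 (tendsto_norm_atTop_atTop.comp hg)).congr fun i =>
    norm_of_nonneg (hf i)

theorem isTheta_natCast_of_le {f : ℕ → ℕ} (C : ℕ) (hle : ∀ n, f n ≤ n)
    (hge : ∀ᶠ n in atTop, n ≤ C * f n) :
    (fun n => (f n : ℝ)) =Θ[atTop] fun n => (n : ℝ) := by
  refine ⟨.of_norm_le fun n => ?_, .of_bound C (hge.mono fun n hn => ?_)⟩
  · simpa using hle n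
  · simpa using mod_cast hn

variable {m : ℕ → ℕ}

theorem isEquivalent_hypergeom_pred (ha : Tendsto (fun n => avgDegree n (m n)) atTop atTop)
    (ha_sq : (fun n => avgDegree n (m n) ^ 2) =o[atTop] fun n => (n : ℝ)) (k : ℕ) :
    (fun n => hypergeom (numEdges n) (m n) (n - 1) k) ~[atTop]
      fun n => (avgDegree n (m n) / n) ^ k * exp (-avgDegree n (m n)) := by
  have pred_sub_eq : (fun n : ℕ => ((n - 1 : ℕ) - 1 * n : ℝ)) =ᶠ[atTop] fun _ => -1 := by
    filter_upwards [eventually_ge_atTop 1] with n hn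
    push_cast [hn]
    ring
  simpa only [one_mul] using isEquivalent_hypergeom_numEdges ha ha_sq
    (pred_sub_eq.trans_isBigO (isBigO_const_const _ one_ne_zero _)) k

theorem eventually_hypergeom_pred_pos (ha : Tendsto (fun n => avgDegree n (m n)) atTop atTop)
    (ha_sq : (fun n => avgDegree n (m n) ^ 2) =o[atTop] fun n => (n : ℝ)) (k : ℕ) :
    ∀ᶠ n in atTop, 0 < hypergeom (numEdges n) (m n) (n - 1) k := by
  filter_upwards [(isEquivalent_hypergeom_pred ha ha_sq k).isTheta.eq_zero_iff,
    ha.eventually_gt_atTop 0, eventually_gt_atTop 0] with n h_zero_iff ha_pos hn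
  refine (hypergeom_nonneg _ _ _ _).lt_of_ne' (h_zero_iff.not.2 ?_)
  positivity

theorem tendsto_hypergeom_div_sq (ha : Tendsto (fun n => avgDegree n (m n)) atTop atTop)
    (ha_sq : (fun n => avgDegree n (m n) ^ 2) =o[atTop] fun n => (n : ℝ)) (k : ℕ) :
    Tendsto (fun n => hypergeom (numEdges n) (m n) (2 * (n - 1) - 1) (2 * k) /
      hypergeom (numEdges n) (m n) (n - 1) k ^ 2) atTop (𝓝 1) := by
  refine (isEquivalent_iff_tendsto_one ?_).1 ?_
  · exact (eventually_hypergeom_pred_pos ha ha_sq k).mono fun n hn => (pow_pos hn 2).ne'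
  have two_mul_pred_sub_eq :
      (fun n : ℕ => ((2 * (n - 1) - 1 : ℕ) - 2 * n : ℝ)) =ᶠ[atTop] fun _ => -3 := by
    filter_upwards [eventually_ge_atTop 2] with n hn
    push_cast [show 1 ≤ 2 * (n - 1) by omega, show 1 ≤ n by omega]
    ring
  refine (isEquivalent_hypergeom_numEdges ha ha_sq
    (two_mul_pred_sub_eq.trans_isBigO (isBigO_const_const _ one_ne_zero _)) (2 * k)).trans ?_
  refine (((isEquivalent_hypergeom_pred ha ha_sq k).pow 2).congr_right
    (.of_forall fun n => ?_)).symm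
  rw [Pi.pow_apply, mul_pow, ← pow_mul', ← exp_nat_mul, Nat.cast_ofNat, mul_neg]

theorem isTheta_choose_mul_hypergeom {f : ℕ → ℕ}
    (hf : (fun n => (f n : ℝ)) =Θ[atTop] fun n => (n : ℝ))
    (ha : Tendsto (fun n => avgDegree n (m n)) atTop atTop)
    (ha_sq : (fun n => avgDegree n (m n) ^ 2) =o[atTop] fun n => (n : ℝ)) (k : ℕ) :
    (fun n => (f n).choose k * hypergeom (numEdges n) (m n) (n - 1) k) =Θ[atTop]
      fun n => avgDegree n (m n) ^ k * exp (-avgDegree n (m n)) := by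
  have f_atTop : Tendsto f atTop atTop := tendsto_natCast_atTop_iff.1 <|
    tendsto_atTop_of_isTheta hf (fun _ => Nat.cast_nonneg _) tendsto_natCast_atTop_atTop
  have choose_isTheta : (fun n => ((f n).choose k : ℝ)) =Θ[atTop] fun n => (n : ℝ) ^ k :=
    .trans ⟨(isTheta_choose k).1.comp_tendsto f_atTop, (isTheta_choose k).2.comp_tendsto f_atTop⟩
      (hf.pow k)
  refine (choose_isTheta.mul (isEquivalent_hypergeom_pred ha ha_sq k).isTheta)
    |>.trans_eventuallyEq ?_
  filter_upwards [eventually_ne_atTop 0] with n hn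
  rw [← mul_assoc, ← mul_pow, mul_div_cancel₀ _ (Nat.cast_ne_zero.2 hn)]

variable {P : ∀ n, Finset (Fin (numEdges n))} {k : ℕ}

theorem whp_forall_degAt_ne (ha : Tendsto (fun n => avgDegree n #(P n)) atTop atTop)
    (ha_sq : (fun n => avgDegree n #(P n) ^ 2) =o[atTop] fun n => (n : ℝ))
    (h : Tendsto (fun n => n * (avgDegree n #(P n) ^ k * exp (-avgDegree n #(P n)))) atTop (𝓝 0)) :
    WHP fun n σ => ∀ v, degAt σ (P n) v ≠ k := by
  have first_moment : Tendsto (fun n => n * ((n - 1).choose k *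
      hypergeom (numEdges n) #(P n) (n - 1) k)) atTop (𝓝 0) :=
    ((isTheta_refl _ _).mul (isTheta_choose_mul_hypergeom ?_ ha ha_sq k)).tendsto_zero_iff.2 h
  · simp only [whp_iff_tendsto_Pr_not, not_forall, not_not]
    refine squeeze_zero' (.of_forall fun n => Pr_nonneg _) ?_ first_moment
    exact (tendsto_atTop_of_avgDegree ha).eventually_ge_atTop k |>.mono fun n =>
      Pr_exists_degAt_eq_le
  · refine isTheta_natCast_of_le 2 (fun n => n.sub_le 1) ?_
    filter_upwards [eventually_ge_atTop 2] with n hn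
    omega

theorem whp_forall_lt_degAt (ha : Tendsto (fun n => avgDegree n #(P n)) atTop atTop)
    (ha_sq : (fun n => avgDegree n #(P n) ^ 2) =o[atTop] fun n => (n : ℝ))
    (h : Tendsto (fun n => n * (avgDegree n #(P n) ^ k * exp (-avgDegree n #(P n)))) atTop (𝓝 0)) :
    WHP fun n σ => ∀ v, k < degAt σ (P n) v := by
  induction k with
  | zero => simpa only [Nat.pos_iff_ne_zero] using whp_forall_degAt_ne ha ha_sq h
  | succ k ih =>
    have h_pred : Tendsto (fun n => n * (avgDegree n #(P n) ^ k * exp (-avgDegree n #(P n))))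
        atTop (𝓝 0) := by
      refine squeeze_zero' (.of_forall fun n => ?_) ?_ h
      · have := avgDegree_nonneg n #(P n)
        positivity
      · filter_upwards [ha.eventually_ge_atTop 1] with n hn
        gcongr
        exact k.le_succ
    exact ((ih h_pred).and (whp_forall_degAt_ne ha ha_sq h)).mono <| .of_forall
      fun n σ hσ v => lt_of_le_of_ne (hσ.1 v) (hσ.2 v).symm

theorem whp_exists_degAt_eq (ha : Tendsto (fun n => avgDegree n #(P n)) atTop atTop)
    (ha_sq : (fun n => avgDegree n #(P n) ^ 2) =o[atTop] fun n => (n : ℝ))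
    (h : Tendsto (fun n => n * (avgDegree n #(P n) ^ k * exp (-avgDegree n #(P n)))) atTop atTop) :
    WHP fun n σ => ∃ v, degAt σ (P n) v = k := by
  let A (n : ℕ) : Finset (Fin n) := {v | (v : ℕ) < n / 2}
  have card_A (n : ℕ) : #(A n) = n / 2 := by
    rw [Fin.card_filter_val_lt]; omega
  have card_compl_A (n : ℕ) : #(A n)ᶜ = n - n / 2 := by
    rw [card_compl, Fintype.card_fin, card_A]
  have expectation_atTop : Tendsto (fun n => #(A n) * ((#(A n)ᶜ).choose k *
      hypergeom (numEdges n) #(P n) (n - 1) k)) atTop atTop := by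
    have card_isTheta : (fun n => (#(A n) : ℝ)) =Θ[atTop] fun n => (n : ℝ) := by
      simp only [card_A]
      refine isTheta_natCast_of_le 3 (fun n => n.div_le_self 2) ?_
      filter_upwards [eventually_ge_atTop 2] with n hn
      omega
    have card_compl_isTheta : (fun n => (#(A n)ᶜ : ℝ)) =Θ[atTop] fun n => (n : ℝ) := by
      simp only [card_compl_A]
      exact isTheta_natCast_of_le 2 (fun n => n.sub_le _) (.of_forall fun n => by omega)
    refine tendsto_atTop_of_isTheta (card_isTheta.mul
      (isTheta_choose_mul_hypergeom card_compl_isTheta ha ha_sq k)) (fun n => ?_) h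
    have := hypergeom_nonneg (numEdges n) #(P n) (n - 1) k
    positivity
  simp only [whp_iff_tendsto_Pr_not, not_exists]
  have bound_tendsto := expectation_atTop.inv_tendsto_atTop.add
    ((tendsto_hypergeom_div_sq ha ha_sq k).sub_const 1)
  rw [sub_self, add_zero] at bound_tendsto
  refine squeeze_zero' (.of_forall fun n => Pr_nonneg _) ?_ bound_tendsto
  filter_upwards [(tendsto_atTop_of_avgDegree ha).eventually_ge_atTop (2 * k),
    eventually_ge_atTop (2 * k + 2), eventually_hypergeom_pred_pos ha ha_sq k] with n hk hn hpos
  refine Pr_forall_degAt_ne_le (card_pos.1 ?_) ?_ hk hpos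
  · rw [card_A]; omega
  · rw [card_compl_A]; omega

end DegreeLimits

section CriticalWindow
open Real Asymptotics Topology

/-- The scale `log n + c log log n` for the average degree of a random graph, at which the expected
number of vertices of degree `k` has order `(log n) ^ (k - c)`. -/
noncomputable def criticalDegree (c : ℝ) (n : ℕ) : ℝ := log n + c * log (log n)

theorem tendsto_log_natCast_atTop : Tendsto (fun n : ℕ => log n) atTop atTop :=
  tendsto_log_atTop.comp tendsto_natCast_atTop_atTop

theorem isEquivalent_criticalDegree (c : ℝ) : criticalDegree c ~[atTop] fun n => log n :=
  IsEquivalent.refl.add_isLittleO <|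
    (isLittleO_log_id_atTop.comp_tendsto tendsto_log_natCast_atTop).const_mul_left c

variable {a : ℕ → ℝ} {c : ℝ}

theorem isEquivalent_log_of_sub_criticalDegree
    (h : (fun n => a n - criticalDegree c n) =O[atTop] fun _ => (1 : ℝ)) :
    a ~[atTop] fun n => log n := by
  have one_isLittleO : (fun _ => (1 : ℝ)) =o[atTop] fun n : ℕ => log n :=
    (isLittleO_const_id_atTop (1 : ℝ)).comp_tendsto tendsto_log_natCast_atTop
  exact ((isEquivalent_criticalDegree c).add_isLittleO (h.trans_isLittleO one_isLittleO)).congr_left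
    (.of_forall fun n => add_sub_cancel _ _)

theorem sq_isLittleO_of_isEquivalent_log (h : a ~[atTop] fun n => log n) :
    (fun n => a n ^ 2) =o[atTop] fun n => (n : ℝ) :=
  (h.pow 2).isTheta.isBigO.trans_isLittleO <|
    (isLittleO_pow_log_id_atTop (n := 2)).comp_tendsto tendsto_natCast_atTop_atTop

theorem isTheta_mul_pow_mul_exp_neg
    (h : (fun n => a n - criticalDegree c n) =O[atTop] fun _ => (1 : ℝ)) (k : ℕ) :
    (fun n => n * (a n ^ k * exp (-a n))) =Θ[atTop] fun n => log n ^ (k - c) := by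
  have exp_isTheta : (fun n : ℕ => exp (log n - a n)) =Θ[atTop]
      fun n : ℕ => exp (-(c * log (log n))) := by
    refine isTheta_exp_comp_exp_comp.2 ((isBigO_one_iff ℝ).1 (h.neg_left.congr_left fun n => ?_))
    rw [criticalDegree]
    ring
  refine .trans_eventuallyEq (.trans (EventuallyEq.isTheta ?_)
    (((isEquivalent_log_of_sub_criticalDegree h).pow k).isTheta.mul exp_isTheta)) ?_
  · filter_upwards [eventually_gt_atTop 0] with n hn
    rw [exp_sub, exp_log (by exact_mod_cast hn), exp_neg, Pi.pow_apply]
    ring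
  · filter_upwards [tendsto_log_natCast_atTop.eventually_gt_atTop 0] with n hn
    rw [rpow_sub hn, rpow_natCast, rpow_def_of_pos hn, Pi.pow_apply, exp_neg, mul_comm c,
      div_eq_mul_inv]

theorem isBigO_natFloor_mul {C : ℝ} (hC : 0 ≤ C) :
    (fun n : ℕ => (⌊C * n⌋₊ : ℝ)) =O[atTop] fun n => (n : ℝ) :=
  .of_bound C <| .of_forall fun n => by
    simpa using Nat.floor_le (show 0 ≤ C * n by positivity)

theorem abs_floor_tsub_sub_le {x : ℝ} (hx : 0 ≤ x) (M : ℕ) :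
    |((⌊x⌋₊ - M : ℕ) : ℝ) - x| ≤ M + 1 := by
  have := Nat.floor_le hx
  have := Nat.lt_floor_add_one x
  have : (0 : ℝ) ≤ M := M.cast_nonneg
  rw [abs_le]
  rcases le_total M ⌊x⌋₊ with h | h
  · rw [Nat.cast_sub h]
    constructor <;> linarith
  · have : (⌊x⌋₊ : ℝ) ≤ M := by exact_mod_cast h
    rw [Nat.sub_eq_zero_of_le h, Nat.cast_zero]
    constructor <;> linarith

theorem isBigO_avgDegree_floor_sub {g : ℕ → ℝ} (hg : ∀ᶠ n in atTop, 0 ≤ g n) {M : ℕ → ℕ}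
    (hM : (fun n => (M n : ℝ)) =O[atTop] fun n => (n : ℝ)) :
    (fun n => avgDegree n (⌊n * g n / 2⌋₊ - M n) - g n) =O[atTop] fun _ => (1 : ℝ) := by
  obtain ⟨C, hC⟩ := hM.bound
  refine .of_bound (2 * (C + 1)) ?_
  filter_upwards [hg, hC, eventually_ge_atTop 1] with n hgn hCn hn
  have hn' : (1 : ℝ) ≤ n := by exact_mod_cast hn
  rw [norm_of_nonneg (M n).cast_nonneg, norm_of_nonneg n.cast_nonneg] at hCn
  have rounding := abs_floor_tsub_sub_le (x := n * g n / 2) (by positivity) (M n)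
  calc |avgDegree n (⌊n * g n / 2⌋₊ - M n) - g n|
      = 2 / n * |((⌊n * g n / 2⌋₊ - M n : ℕ) : ℝ) - n * g n / 2| := by
        rw [← abs_of_pos (show (0 : ℝ) < 2 / n by positivity), ← abs_mul, avgDegree]
        congr 1
        field_simp
    _ ≤ 2 / n * (C * n + n) := by gcongr; linarith
    _ = 2 * (C + 1) * ‖(1 : ℝ)‖ := by rw [norm_one]; field_simp

/-- The time at which the random graph process has average degree `criticalDegree c n`. When
`k - 1 < c < k`, its minimum degree is then `k` with high probability. -/
noncomputable def criticalTime (c : ℝ) (n : ℕ) : ℕ := ⌊n * criticalDegree c n / 2⌋₊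

variable {M : ℕ → ℕ} {k : ℕ}

theorem eventually_criticalTime_le_numEdges (c : ℝ) :
    ∀ᶠ n in atTop, criticalTime c n ≤ numEdges n := by
  have criticalDegree_isLittleO : criticalDegree c =o[atTop] fun n => (n : ℝ) :=
    (isEquivalent_criticalDegree c).trans_isLittleO
      (isLittleO_log_id_atTop.comp_tendsto tendsto_natCast_atTop_atTop)
  filter_upwards [criticalDegree_isLittleO.bound one_half_pos, eventually_ge_atTop 2] with n h hn
  rw [norm_eq_abs, norm_of_nonneg n.cast_nonneg] at h
  refine Nat.floor_le_of_le ?_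
  rw [numEdges, ← Nat.choose_two_right, Nat.cast_choose_two]
  have : (2 : ℝ) ≤ n := by exact_mod_cast hn
  gcongr
  linarith [le_abs_self (criticalDegree c n)]

theorem isBigO_avgDegree_card_window_sub (hM : (fun n => (M n : ℝ)) =O[atTop] fun n => (n : ℝ))
    (c : ℝ) :
    (fun n => avgDegree n #(window n (M n) (criticalTime c n)) - criticalDegree c n)
      =O[atTop] fun _ => (1 : ℝ) := by
  have criticalDegree_nonneg : ∀ᶠ n in atTop, 0 ≤ criticalDegree c n :=
    ((isEquivalent_criticalDegree c).symm.tendsto_atTop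
      tendsto_log_natCast_atTop).eventually_ge_atTop 0
  refine EventuallyEq.trans_isBigO ?_ (isBigO_avgDegree_floor_sub criticalDegree_nonneg hM)
  filter_upwards [eventually_criticalTime_le_numEdges c] with n hn
  rw [card_window hn, criticalTime]

theorem whp_forall_lt_degAt_window (hM : (fun n => (M n : ℝ)) =O[atTop] fun n => (n : ℝ))
    (hc : k < c) : WHP fun n σ => ∀ v, k < degAt σ (window n (M n) (criticalTime c n)) v := by
  have a_sub_isBigO := isBigO_avgDegree_card_window_sub hM c
  have a_isEquivalent := isEquivalent_log_of_sub_criticalDegree a_sub_isBigO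
  refine whp_forall_lt_degAt (a_isEquivalent.symm.tendsto_atTop tendsto_log_natCast_atTop)
    (sq_isLittleO_of_isEquivalent_log a_isEquivalent)
    ((isTheta_mul_pow_mul_exp_neg a_sub_isBigO k).tendsto_zero_iff.2 ?_)
  simp only [← neg_sub c]
  exact (tendsto_rpow_neg_atTop (sub_pos.2 hc)).comp tendsto_log_natCast_atTop

theorem whp_exists_degAt_window_eq (hM : (fun n => (M n : ℝ)) =O[atTop] fun n => (n : ℝ))
    (hc : c < k) : WHP fun n σ => ∃ v, degAt σ (window n (M n) (criticalTime c n)) v = k := by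
  have a_sub_isBigO := isBigO_avgDegree_card_window_sub hM c
  have a_isEquivalent := isEquivalent_log_of_sub_criticalDegree a_sub_isBigO
  refine whp_exists_degAt_eq (a_isEquivalent.symm.tendsto_atTop tendsto_log_natCast_atTop)
    (sq_isLittleO_of_isEquivalent_log a_isEquivalent)
    (tendsto_atTop_of_isTheta (isTheta_mul_pow_mul_exp_neg a_sub_isBigO k) (fun n => ?_)
      ((tendsto_rpow_atTop (sub_pos.2 hc)).comp tendsto_log_natCast_atTop))
  have := avgDegree_nonneg n #(window n (M n) (criticalTime c n))
  positivity

theorem low_degree_vertices_get_edges_general (k : ℕ)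
    (hM : (fun n => (M n : ℝ)) =O[atTop] fun n => (n : ℝ)) :
    WHP fun n σ => ∀ v,
      k + 1 ≤ #{i : Fin (numEdges n) | M n ≤ i ∧ i < tau (k + 2) σ ∧ v ∈ (σ i).1} := by
  have many_edges := whp_forall_lt_degAt_window (k := k) (c := k + 1 / 2) hM (by simp)
  have low_degree := whp_exists_degAt_window_eq (M := fun _ => 0) (c := k + 1 / 2) (k := k + 1)
    (by simp [isBigO_zero]) (by push_cast; gcongr; norm_num)
  refine (many_edges.and low_degree).mono ?_
  filter_upwards [eventually_ge_atTop (k + 3)] with n hn σ ⟨hmany, w, hw⟩ v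
  have before_tau : criticalTime (k + 1 / 2) n < tau (k + 2) σ :=
    lt_tau (by omega) (hw.trans_lt (k + 1).lt_succ_self)
  refine (degAt_eq_card σ _ v ▸ hmany v).trans_le (card_le_card ?_)
  simp only [window, filter_filter, and_assoc]
  exact monotone_filter_right _ fun i _ => And.imp_right <| And.imp_left (·.trans before_tau)

end CriticalWindow

/-- Fix an integer `k ≥ 2` and constants `δ > 0`, `0 < ε < δ/(2k)`, and
set `C = k·ε⁻²`. With high probability, for every vertex `v` with
`1 ≤ deg_{B_{⌊Cn⌋}}(v) ≤ k − 1` (Builder's graph from Algorithm 1), at least `k − 1` of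
the edges `e_{⌊Cn⌋+1}, …, e_{τ_k}` are incident to `v`. -/
theorem low_degree_vertices_get_edges (k : ℕ) (hk : 2 ≤ k) (δ ε : ℝ) (hδ : 0 < δ)
    (hε : 0 < ε) (hεδ : ε < δ / (2 * k)) :
    Filter.Tendsto
      (fun n : ℕ => Pr (fun σ : Ord n =>
        ∀ v : Fin n,
          1 ≤ deg (algB k σ ⌊(k : ℝ) * ε⁻¹ ^ 2 * (n : ℝ)⌋₊) v →
          deg (algB k σ ⌊(k : ℝ) * ε⁻¹ ^ 2 * (n : ℝ)⌋₊) v ≤ k - 1 →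
          k - 1 ≤ ((Finset.univ : Finset (Fin (numEdges n))).filter
            (fun i : Fin (numEdges n) => ⌊(k : ℝ) * ε⁻¹ ^ 2 * (n : ℝ)⌋₊ ≤ (i : ℕ) ∧ (i : ℕ) < tau k σ ∧
              v ∈ ((σ i : EdgeType n) : Sym2 (Fin n)))).card))
      Filter.atTop (nhds 1) := by
  obtain ⟨j, rfl⟩ := Nat.exists_eq_add_of_le' hk
  exact (low_degree_vertices_get_edges_general j (isBigO_natFloor_mul (by positivity))).mono
    (.of_forall fun n σ h v _ _ => h v)

end RGP
end

section
/- Let uv ∈ E(G) and let r, s be integers with 1 ≤ r ≤ d(u) and 1 ≤ s ≤ d(v). The probability that exactly r−1 of the edges of G incident to u and exactly s−1 of the edges of G incident to v precede uv in the random ordering equals (1/(d(u)+d(v)−1)) · binom(d(u)−1, r−1)·binom(d(v)−1, s−1) / binom(d(u)+d(v)−2, r+s−2). -/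
/-!
Let `A` and `B` be the sets of edges other than `uv` at `u` and at `v`; they are disjoint because
`G` is simple. Exchanging `uv` with another edge of `A ∪ B ∪ {uv}` shows that the number of edges
of `A ∪ B` preceding `uv` is uniform on `{0, …, #A + #B}`. Permuting `A ∪ B` shows that, given that
this number is `k`, the set of preceding edges is uniform among the `k`-subsets of `A ∪ B`, and
exactly `(#A).choose i * (#B).choose j` of the `(i + j)`-subsets meet `A` in `i` and `B` in `j`
elements.
-/

open Finset

namespace RGP14

section Orderings

variable {ι α : Type*} [LinearOrder ι]

/-- The set of elements of `S` that come before `e` in the ordering `f`. An ordering is a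
bijection from positions to elements, so that `e` stands at position `f.symm e`. -/
def predecessors (f : ι ≃ α) (S : Finset α) (e : α) : Finset α :=
  {x ∈ S | f.symm x < f.symm e}

@[simp]
lemma mem_predecessors {f : ι ≃ α} {S : Finset α} {e x : α} :
    x ∈ predecessors f S e ↔ x ∈ S ∧ f.symm x < f.symm e :=
  mem_filter

lemma predecessors_subset (f : ι ≃ α) (S : Finset α) (e : α) : predecessors f S e ⊆ S :=
  filter_subset _ _

lemma predecessors_trans_perm (f : ι ≃ α) (σ : Equiv.Perm α) (S : Finset α) (e : α) :
    predecessors (f.trans σ) (S.map σ.toEmbedding) (σ e) =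
      (predecessors f S e).map σ.toEmbedding := by
  simp [predecessors, filter_map]

lemma card_predecessors_lt_card_predecessors {f : ι ≃ α} {S : Finset α} {x y : α} (hx : x ∈ S)
    (hxy : f.symm x < f.symm y) : #(predecessors f S x) < #(predecessors f S y) := by
  refine card_lt_card ((ssubset_iff_of_subset fun z hz => ?_).2 ⟨x, ?_, ?_⟩)
  · rw [mem_predecessors] at hz ⊢
    exact ⟨hz.1, hz.2.trans hxy⟩
  · exact mem_predecessors.2 ⟨hx, hxy⟩
  · simp

lemma card_predecessors_injOn (f : ι ≃ α) (S : Finset α) :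
    Set.InjOn (fun x => #(predecessors f S x)) S := by
  intro x hx y hy hxy
  by_contra hne
  rcases lt_or_gt_of_ne (f.symm.injective.ne hne) with hlt | hgt
  · exact (card_predecessors_lt_card_predecessors hx hlt).ne hxy
  · exact (card_predecessors_lt_card_predecessors hy hgt).ne' hxy

lemma card_predecessors_lt_card {f : ι ≃ α} {S : Finset α} {e : α} (he : e ∈ S) :
    #(predecessors f S e) < #S :=
  card_lt_card <| (ssubset_iff_of_subset (predecessors_subset f S e)).2 ⟨e, he, by simp⟩

lemma card_filter_card_predecessors_eq_one (f : ι ≃ α) {S : Finset α} {k : ℕ} (hk : k < #S) :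
    #{x ∈ S | #(predecessors f S x) = k} = 1 := by
  have himage : S.image (fun x => #(predecessors f S x)) = range #S :=
    eq_of_subset_of_card_le
      (image_subset_iff.2 fun x hx => mem_range.2 (card_predecessors_lt_card hx))
      (by rw [card_range, card_image_of_injOn (card_predecessors_injOn f S)])
  obtain ⟨x, hx, hxk⟩ := mem_image.1 (himage ▸ mem_range.2 hk)
  refine card_eq_one.2 ⟨x, eq_singleton_iff_unique_mem.2 ⟨mem_filter.2 ⟨hx, hxk⟩, ?_⟩⟩
  intro y hy
  obtain ⟨hyS, hyk⟩ := mem_filter.1 hy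
  exact card_predecessors_injOn f S hyS hx (hyk.trans hxk.symm)

lemma exists_perm_map_eq {S P Q : Finset α} (hP : P ⊆ S) (hQ : Q ⊆ S) (hPQ : #P = #Q) :
    ∃ σ : Equiv.Perm α, (∀ x ∉ S, σ x = x) ∧ P.map σ.toEmbedding = Q := by
  classical
  let g : {x : S // x.1 ∈ P} ≃ {x : S // x.1 ∈ Q} :=
    ((Equiv.subtypeSubtypeEquivSubtype fun hx => hP hx).trans (equivOfCardEq hPQ)).trans
      (Equiv.subtypeSubtypeEquivSubtype fun hx => hQ hx).symm
  refine ⟨g.extendSubtype.ofSubtype, fun x hx => Equiv.Perm.ofSubtype_apply_of_not_mem _ hx, ?_⟩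
  refine eq_of_subset_of_card_le ?_ (by rw [card_map, hPQ])
  intro y hy
  obtain ⟨x, hx, rfl⟩ := mem_map.1 hy
  have hgx : (g.extendSubtype ⟨x, hP hx⟩).1 ∈ Q := g.extendSubtype_mem ⟨x, hP hx⟩ hx
  simpa [Equiv.Perm.ofSubtype_apply_of_mem _ (hP hx)] using hgx

variable [DecidableEq α]

lemma predecessors_erase (f : ι ≃ α) (S : Finset α) (e : α) :
    predecessors f (S.erase e) e = predecessors f S e := by
  ext x
  have hne : f.symm x < f.symm e → x ≠ e := by
    rintro h rfl
    exact h.false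
  simp only [mem_predecessors, mem_erase]
  tauto

lemma predecessors_union_inter_left (f : ι ≃ α) {A B : Finset α} (e : α) :
    predecessors f (A ∪ B) e ∩ A = predecessors f A e := by
  ext x
  simp only [mem_inter, mem_predecessors, mem_union]
  tauto

lemma predecessors_union_inter_right (f : ι ≃ α) {A B : Finset α} (e : α) :
    predecessors f (A ∪ B) e ∩ B = predecessors f B e := by
  rw [union_comm, predecessors_union_inter_left]

lemma card_filter_card_inter_eq {A B : Finset α} (hAB : Disjoint A B) (i j : ℕ) :
    #{P ∈ (A ∪ B).powerset | #(P ∩ A) = i ∧ #(P ∩ B) = j} = (#A).choose i * (#B).choose j := by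
  rw [← card_powersetCard, ← card_powersetCard, ← card_product]
  have hinter {P Q : Finset α} (hP : P ⊆ A) (hQ : Q ⊆ B) : (P ∪ Q) ∩ A = P ∧ (P ∪ Q) ∩ B = Q := by
    rw [union_inter_distrib_right, union_inter_distrib_right, inter_eq_left.2 hP,
      inter_eq_left.2 hQ, disjoint_iff_inter_eq_empty.1 (hAB.mono_left hP),
      disjoint_iff_inter_eq_empty.1 (hAB.mono_right hQ).symm]
    simp
  refine card_nbij' (fun P => (P ∩ A, P ∩ B)) (fun P => P.1 ∪ P.2) ?_ ?_ ?_ ?_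
  · intro P hP
    simp_all
  · rintro ⟨P, Q⟩ h
    simp only [coe_product, Set.mem_prod, mem_coe, mem_powersetCard] at h
    obtain ⟨⟨hP, rfl⟩, hQ, rfl⟩ := h
    simp only [coe_filter, mem_powerset, Set.mem_ofPred_eq]
    rw [(hinter hP hQ).1, (hinter hP hQ).2]
    exact ⟨union_subset_union hP hQ, rfl, rfl⟩
  · intro P hP
    rw [mem_coe, mem_filter, mem_powerset] at hP
    dsimp only
    rw [← inter_union_distrib_left, inter_eq_left.2 hP.1]
  · rintro ⟨P, Q⟩ h
    simp only [coe_product, Set.mem_prod, mem_coe, mem_powersetCard] at h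
    exact Prod.ext (hinter h.1.1 h.2.1).1 (hinter h.1.1 h.2.1).2

variable [Fintype ι] [DecidableEq ι] [Fintype α]

lemma card_filter_predecessors_perm {S : Finset α} {σ : Equiv.Perm α}
    (hσ : S.map σ.toEmbedding = S) (e : α) (p : Finset α → Prop) [DecidablePred p] :
    #{f : ι ≃ α | p (predecessors f S (σ e))} =
      #{f : ι ≃ α | p ((predecessors f S e).map σ.toEmbedding)} := by
  refine (card_equiv (Equiv.equivCongr (Equiv.refl ι) σ) fun f => ?_).symm
  have h : Equiv.equivCongr (Equiv.refl ι) σ f = f.trans σ := rfl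
  simp [h, ← predecessors_trans_perm, hσ]

lemma card_mul_card_filter_card_predecessors_eq {S : Finset α} {e : α} (he : e ∈ S) {k : ℕ}
    (hk : k < #S) :
    #S * #{f : ι ≃ α | #(predecessors f S e) = k} = Fintype.card (ι ≃ α) := by
  have hsymm : ∀ x ∈ S, #{f : ι ≃ α | #(predecessors f S x) = k} =
      #{f : ι ≃ α | #(predecessors f S e) = k} := by
    intro x hx
    have hswap : S.map (Equiv.swap e x).toEmbedding = S := map_perm fun y hy => by
      by_contra hyS
      exact hy (Equiv.swap_apply_of_ne_of_ne (fun h => hyS (h ▸ he)) fun h => hyS (h ▸ hx))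
    simpa using card_filter_predecessors_perm (ι := ι) hswap e (fun P => #P = k)
  calc #S * #{f : ι ≃ α | #(predecessors f S e) = k}
      = ∑ x ∈ S, #{f : ι ≃ α | #(predecessors f S x) = k} := by
        rw [sum_congr rfl hsymm, sum_const, smul_eq_mul]
    _ = ∑ f : ι ≃ α, #{x ∈ S | #(predecessors f S x) = k} :=
        sum_card_bipartiteAbove_eq_sum_card_bipartiteBelow _
    _ = Fintype.card (ι ≃ α) := by
        simp [card_filter_card_predecessors_eq_one _ hk]

lemma card_filter_predecessors_eq_of_card_eq {S P Q : Finset α} {e : α} (he : e ∉ S) (hP : P ⊆ S)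
    (hQ : Q ⊆ S) (hPQ : #P = #Q) :
    #{f : ι ≃ α | predecessors f S e = P} = #{f : ι ≃ α | predecessors f S e = Q} := by
  obtain ⟨σ, hfix, rfl⟩ := exists_perm_map_eq hP hQ hPQ
  have hσ : S.map σ.toEmbedding = S := map_perm fun x hx => by
    by_contra hxS
    exact hx (hfix x hxS)
  simpa [hfix e he] using
    (card_filter_predecessors_perm (ι := ι) hσ e (· = P.map σ.toEmbedding)).symm

lemma card_filter_predecessors_mem (S : Finset α) (e : α) (𝒜 : Finset (Finset α)) :
    #{f : ι ≃ α | predecessors f S e ∈ 𝒜} = ∑ P ∈ 𝒜, #{f : ι ≃ α | predecessors f S e = P} := by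
  rw [card_eq_sum_card_fiberwise (f := fun f => predecessors f S e) (t := 𝒜) (by simp [Set.MapsTo])]
  refine sum_congr rfl fun P hP => congrArg card ?_
  ext f
  simp only [mem_filter, mem_univ, true_and, and_iff_right_iff_imp]
  exact fun h => h ▸ hP

lemma mul_card_filter_predecessors_eq {S P : Finset α} {e : α} (he : e ∉ S) (hP : P ⊆ S) :
    (#S + 1) * (#S).choose #P * #{f : ι ≃ α | predecessors f S e = P} =
      Fintype.card (ι ≃ α) := by
  have hrank : (#S).choose #P * #{f : ι ≃ α | predecessors f S e = P} =
      #{f : ι ≃ α | #(predecessors f S e) = #P} := by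
    have h := card_filter_predecessors_mem (ι := ι) S e (powersetCard #P S)
    rw [sum_congr rfl fun Q hQ => card_filter_predecessors_eq_of_card_eq he
      (mem_powersetCard.1 hQ).1 hP (mem_powersetCard.1 hQ).2] at h
    simpa [mem_powersetCard, predecessors_subset] using h.symm
  have huniform := card_mul_card_filter_card_predecessors_eq (ι := ι) (mem_insert_self e S)
    (k := #P) (by rw [card_insert_of_notMem he]; exact Nat.lt_succ_of_le (card_le_card hP))
  simp only [← predecessors_erase _ (insert e S), erase_insert he, card_insert_of_notMem he]
    at huniform
  rw [mul_assoc, hrank, huniform]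

lemma mul_card_filter_predecessors_mem {S : Finset α} {e : α} (he : e ∉ S) {k : ℕ}
    {𝒜 : Finset (Finset α)} (h𝒜 : 𝒜 ⊆ powersetCard k S) :
    (#S + 1) * (#S).choose k * #{f : ι ≃ α | predecessors f S e ∈ 𝒜} =
      #𝒜 * Fintype.card (ι ≃ α) := by
  rw [card_filter_predecessors_mem, mul_sum, ← smul_eq_mul (#𝒜), ← sum_const]
  refine sum_congr rfl fun P hP => ?_
  obtain ⟨hPS, rfl⟩ := mem_powersetCard.1 (h𝒜 hP)
  exact mul_card_filter_predecessors_eq he hPS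

lemma mul_card_filter_card_predecessors_eq_and {A B : Finset α} {e : α} (heA : e ∉ A)
    (heB : e ∉ B) (hAB : Disjoint A B) (i j : ℕ) :
    (#A + #B + 1) * (#A + #B).choose (i + j) *
        #{f : ι ≃ α | #(predecessors f A e) = i ∧ #(predecessors f B e) = j} =
      (#A).choose i * (#B).choose j * Fintype.card (ι ≃ α) := by
  have hsub : {P ∈ (A ∪ B).powerset | #(P ∩ A) = i ∧ #(P ∩ B) = j} ⊆
      powersetCard (i + j) (A ∪ B) := by
    intro P hP
    obtain ⟨hPAB, rfl, rfl⟩ : P ⊆ A ∪ B ∧ _ := by simpa only [mem_filter, mem_powerset] using hP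
    rw [mem_powersetCard, ← card_union_of_disjoint (hAB.mono inter_subset_right inter_subset_right),
      ← inter_union_distrib_left, inter_eq_left.2 hPAB]
    exact ⟨hPAB, rfl⟩
  have h := mul_card_filter_predecessors_mem (ι := ι) (notMem_union.2 ⟨heA, heB⟩) hsub
  simpa only [card_union_of_disjoint hAB, card_filter_card_inter_eq hAB, mem_filter, mem_powerset,
    predecessors_subset, true_and, predecessors_union_inter_left,
    predecessors_union_inter_right] using h

lemma card_filter_card_predecessors_eq_and_div {𝕜 : Type*} [Field 𝕜] [CharZero 𝕜]
    [Nonempty (ι ≃ α)] {A B : Finset α} {e : α} (hAB : A ∩ B = {e}) {i j : ℕ}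
    (hij : i + j + 2 ≤ #A + #B) :
    (#{f : ι ≃ α | #(predecessors f A e) = i ∧ #(predecessors f B e) = j} : 𝕜) /
        (Fintype.card (ι ≃ α) : 𝕜) =
      (1 / ((#A + #B - 1 : ℕ) : 𝕜)) * (((#A - 1).choose i : 𝕜) * ((#B - 1).choose j : 𝕜)) /
        ((#A + #B - 2).choose (i + j) : 𝕜) := by
  obtain ⟨heA, heB⟩ : e ∈ A ∧ e ∈ B := by rw [← mem_inter, hAB, mem_singleton]
  have hdisj : Disjoint (A.erase e) (B.erase e) := by
    rw [disjoint_iff_inter_eq_empty, erase_inter, inter_erase, hAB]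
    simp
  have h := mul_card_filter_card_predecessors_eq_and (ι := ι) (notMem_erase e A)
    (notMem_erase e B) hdisj i j
  simp only [predecessors_erase] at h
  obtain ⟨a, ha⟩ : ∃ a, #A = a + 1 := Nat.exists_eq_add_one.2 (card_pos.2 ⟨e, heA⟩)
  obtain ⟨b, hb⟩ : ∃ b, #B = b + 1 := Nat.exists_eq_add_one.2 (card_pos.2 ⟨e, heB⟩)
  rw [card_erase_of_mem heA, card_erase_of_mem heB, ha, hb] at h
  rw [ha, hb, show a + 1 + (b + 1) - 1 = a + b + 1 by lia, show a + 1 + (b + 1) - 2 = a + b by lia]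
  simp only [Nat.add_sub_cancel] at h ⊢
  have hchoose : ((a + b).choose (i + j) : 𝕜) ≠ 0 :=
    mod_cast (Nat.choose_pos (by lia)).ne'
  have hsucc : ((a + b + 1 : ℕ) : 𝕜) ≠ 0 := Nat.cast_ne_zero.2 (Nat.succ_ne_zero _)
  have hcard : (Fintype.card (ι ≃ α) : 𝕜) ≠ 0 := Nat.cast_ne_zero.2 Fintype.card_ne_zero
  rw [one_div_mul_eq_div, div_div, div_eq_div_iff hcard (mul_ne_zero hsucc hchoose), mul_comm]
  exact_mod_cast h

end Orderings

section Position

variable {β : Type*} [DecidableEq β] {E : Finset β}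

/-- The position of `x` in an ordering `f` of the finite set `E`, counted from `0`. Elements
outside `E` get the value `#E`, so that they come after all elements of `E`. -/
def position (f : Fin #E ≃ {x // x ∈ E}) (x : β) : ℕ :=
  if hx : x ∈ E then (f.symm ⟨x, hx⟩ : ℕ) else #E

lemma card_filter_position_lt (f : Fin #E ≃ {x // x ∈ E}) (S : Finset β) (e : {x // x ∈ E}) :
    #{x ∈ S | position f x < position f e} = #(predecessors f (S.subtype (· ∈ E)) e) := by
  rw [← card_map (Function.Embedding.subtype _)]
  congr 1
  ext x
  by_cases hx : x ∈ E
  · simp [position, hx]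
  · simp [position, hx, (f.symm e).is_lt.le]

end Position

section Graph

variable {V : Type*} [DecidableEq V] (G : SimpleGraph V) [Fintype G.edgeSet]

lemma card_subtype_incidenceFinset (w : V) [Fintype (G.neighborSet w)] :
    #((G.incidenceFinset w).subtype (· ∈ G.edgeFinset)) = G.degree w := by
  rw [card_subtype, filter_true_of_mem (G.incidenceFinset_subset w),
    G.card_incidenceFinset_eq_degree]

lemma subtype_incidenceFinset_inter {u v : V} [Fintype (G.neighborSet u)]
    [Fintype (G.neighborSet v)] (huv : G.Adj u v) :
    (G.incidenceFinset u).subtype (· ∈ G.edgeFinset) ∩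
        (G.incidenceFinset v).subtype (· ∈ G.edgeFinset) =
      {⟨s(u, v), SimpleGraph.mem_edgeFinset.2 huv⟩} := by
  ext ⟨x, hx⟩
  simpa [Subtype.ext_iff] using Set.ext_iff.1 (G.incidenceSet_inter_incidenceSet_of_adj huv) x

theorem edge_order_probability_general {u v : V} [Fintype (G.neighborSet u)]
    [Fintype (G.neighborSet v)] (huv : G.Adj u v) {r s : ℕ} (hr : 1 ≤ r) (hs : 1 ≤ s)
    (hrs : r + s ≤ G.degree u + G.degree v) :
    (#{f : Fin #G.edgeFinset ≃ {e : Sym2 V // e ∈ G.edgeFinset} |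
        #{e ∈ G.incidenceFinset u | position f e < position f s(u, v)} = r - 1 ∧
        #{e ∈ G.incidenceFinset v | position f e < position f s(u, v)} = s - 1} : ℝ) /
      (Fintype.card (Fin #G.edgeFinset ≃ {e : Sym2 V // e ∈ G.edgeFinset}) : ℝ) =
    (1 / ((G.degree u + G.degree v - 1 : ℕ) : ℝ)) *
      (((G.degree u - 1).choose (r - 1) : ℝ) * ((G.degree v - 1).choose (s - 1) : ℝ)) /
      ((G.degree u + G.degree v - 2).choose (r + s - 2) : ℝ) := by
  have : Nonempty (Fin #G.edgeFinset ≃ {e : Sym2 V // e ∈ G.edgeFinset}) :=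
    ⟨G.edgeFinset.equivFin.symm⟩
  have hcount := fun (f : Fin #G.edgeFinset ≃ {e : Sym2 V // e ∈ G.edgeFinset}) (w : V)
      [Fintype (G.neighborSet w)] =>
    card_filter_position_lt f (G.incidenceFinset w) ⟨s(u, v), SimpleGraph.mem_edgeFinset.2 huv⟩
  simp only [hcount]
  rw [card_filter_card_predecessors_eq_and_div (subtype_incidenceFinset_inter G huv)
      (by simp only [card_subtype_incidenceFinset]; lia),
    card_subtype_incidenceFinset, card_subtype_incidenceFinset,
    show r - 1 + (s - 1) = r + s - 2 by lia]

end Graph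

open scoped Classical in
/-- Let `G` be a finite simple graph, order its edges uniformly at
random, and let `uv ∈ E(G)` and `1 ≤ r ≤ d(u)`, `1 ≤ s ≤ d(v)`. The probability that
exactly `r−1` of the edges incident to `u` and exactly `s−1` of the edges incident to
`v` precede `uv` in the ordering is
`(1/(d(u)+d(v)−1)) · binom(d(u)−1, r−1)·binom(d(v)−1, s−1) / binom(d(u)+d(v)−2, r+s−2)`. -/
theorem edge_order_probability {V : Type*} [Fintype V] [DecidableEq V]
    (G : SimpleGraph V) [DecidableRel G.Adj] (u v : V) (huv : G.Adj u v)
    (r s : ℕ) (hr : 1 ≤ r) (hru : r ≤ G.degree u) (hs : 1 ≤ s) (hsv : s ≤ G.degree v) :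
    (((Finset.univ :
        Finset (Fin G.edgeFinset.card ≃ {e : Sym2 V // e ∈ G.edgeFinset})).filter
      (fun f =>
        letI pos : Sym2 V → ℕ := fun e =>
          if he : e ∈ G.edgeFinset then (f.symm ⟨e, he⟩ : ℕ) else G.edgeFinset.card
        ((G.incidenceFinset u).filter (fun e => pos e < pos s(u, v))).card = r - 1 ∧
        ((G.incidenceFinset v).filter (fun e => pos e < pos s(u, v))).card = s - 1)).card : ℝ) /
      (Fintype.card (Fin G.edgeFinset.card ≃ {e : Sym2 V // e ∈ G.edgeFinset}) : ℝ) =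
    (1 / ((G.degree u + G.degree v - 1 : ℕ) : ℝ)) *
      (((G.degree u - 1).choose (r - 1) : ℝ) * ((G.degree v - 1).choose (s - 1) : ℝ)) /
      (((G.degree u + G.degree v - 2).choose (r + s - 2) : ℝ)) :=
  edge_order_probability_general G huv hr hs (by lia)

end RGP14
end
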